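/- Let G = (V,E) be a finite multigraph with an arbitrary orientation of its edges and incidence matrix ε (ε_{ev} = +1 if e starts at v, −1 if e ends at v, 0 otherwise, with ε_{ev} = 0 for self-loops). Let Q_G be the (|E|+|V|)×(|E|+|V|) real matrix Q_G = D + A, where D is diagonal with D_{ee} = α_e for e ∈ E and D_{vv} = q_v for v ∈ V, and A is antisymmetric with A_{e,v} = ε_{ev} = −A_{v,e} and all other entries zero. Then det Q_G = 𝒰_G(α,q) := Σ_{F spanning forest of G} Π_{e∉F} α_e Π_{C connected component of F} q_C, where q_C = Σ_{v∈C} q_v and the components of F include isolated vertices. -/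

import Mathlib

/-!
The identity is proved by deletion-contraction. The determinant is affine in `α_e`: the coefficient
of `α_e` is the determinant for the graph with `e` deleted, and the value at `α_e = 0` vanishes if
`e` is a self-loop and is the determinant for the graph with `e` contracted otherwise
(`det_contract`). The forest sum obeys the same recursion: forests avoiding `e` are forests of the
deletion, no forest contains a self-loop, and forests containing a non-loop `e` correspond to
forests of the contraction, with the same component weights (`forestWeight_merge`).

To keep the vertex and edge types fixed, the contraction of an edge from `u` to `w` moves all
endpoints from `w` to `u` and adds the weight of `w` to that of `u`, while `w` remains as an isolated
vertex of weight `1` (`merge`, `mergeQ`). Likewise edges are deleted by replacing their rows by unit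
rows (`redMat`), and the induction in `det_redMat` runs over the set `B` of remaining edges.

Forests are compared under contraction through the numerical criterion `k A + |A| = |V|`
(`isForest_iff`). This criterion and the comparison of components both rest on `quotient_glue`,
which describes the classes of an equivalence relation after two of them are joined.
-/

open Finset

attribute [local instance] Classical.propDecidable

/-- A finite multigraph: vertex type `V`, edge type `E`, each edge carrying an
ordered pair of (possibly equal) endpoints (the order is an arbitrary orientation). -/
structure Multigraph (V E : Type) where
  ends : E → V × V

namespace Multigraph

variable {V E Fl : Type} {d : ℕ}

/-- `v` and `w` are joined by an edge of `A`. -/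
def edgeRel (G : Multigraph V E) (A : Finset E) (v w : V) : Prop :=
  ∃ e ∈ A, G.ends e = (v, w) ∨ G.ends e = (w, v)

/-- The partition of `V` into connected components of the spanning subgraph `(V, A)`. -/
def compSetoid (G : Multigraph V E) (A : Finset E) : Setoid V :=
  Relation.EqvGen.setoid (G.edgeRel A)

/-- `v` and `w` lie in the same connected component of the spanning subgraph `(V, A)`. -/
def Reach (G : Multigraph V E) (A : Finset E) (v w : V) : Prop :=
  Relation.EqvGen (G.edgeRel A) v w

/-- `k A`: the number of connected components of the spanning subgraph `(V, A)`. -/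
noncomputable def k (G : Multigraph V E) (A : Finset E) : ℕ :=
  Nat.card (Quotient (G.compSetoid A))

/-- The rank `r(A) = |V| - k(A)` of the spanning subgraph `(V, A)`. -/
noncomputable def rank (G : Multigraph V E) (A : Finset E) : ℕ :=
  Nat.card V - G.k A

/-- The nullity `n(A) = |A| + k(A) - |V|` of the spanning subgraph `(V, A)`. -/
noncomputable def nullity (G : Multigraph V E) (A : Finset E) : ℕ :=
  A.card + G.k A - Nat.card V

/-- A self-loop: both endpoints coincide. -/
def IsLoop (G : Multigraph V E) (e : E) : Prop :=
  (G.ends e).1 = (G.ends e).2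

/-- A bridge: deleting the edge increases the number of connected components. -/
def IsBridge (G : Multigraph V E) [Fintype E] (e : E) : Prop :=
  G.k (Finset.univ.erase e) ≠ G.k Finset.univ

/-- The Tutte polynomial, via the subset (rank–nullity) expansion. -/
noncomputable def tutte (G : Multigraph V E) [Fintype E] (x y : ℝ) : ℝ :=
  ∑ A : Finset E,
    (x - 1) ^ (G.rank Finset.univ - G.rank A) * (y - 1) ^ G.nullity A

/-- Deletion of the edge `e`. -/
def delete (G : Multigraph V E) (e : E) : Multigraph V {e' : E // e' ≠ e} :=
  ⟨fun e' => G.ends e'⟩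

/-- The setoid identifying the two endpoints of `e`. -/
def contrSetoid (G : Multigraph V E) (e : E) : Setoid V :=
  Relation.EqvGen.setoid (fun v w => G.ends e = (v, w))

/-- Contraction of the edge `e`: its endpoints are identified and `e` is removed.
(For a self-loop this yields a graph isomorphic to the deletion `G - e`,
in accordance with the convention `G/e = G - e` for self-loops.) -/
def contract (G : Multigraph V E) (e : E) :
    Multigraph (Quotient (G.contrSetoid e)) {e' : E // e' ≠ e} :=
  ⟨fun e' => (Quotient.mk _ (G.ends e'.1).1, Quotient.mk _ (G.ends e'.1).2)⟩

/-- The multivariate Tutte polynomial `Z_G(q, β)`. -/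
noncomputable def multiTutte (G : Multigraph V E) [Fintype E] (q : ℝ) (β : E → ℝ) : ℝ :=
  ∑ A : Finset E, q ^ G.k A * ∏ e ∈ A, β e

/-- `(V, A)` is acyclic (a forest): every edge of `A` is a bridge of `(V, A)`. -/
def IsForest (G : Multigraph V E) [DecidableEq E] (A : Finset E) : Prop :=
  ∀ e ∈ A, G.k (A.erase e) ≠ G.k A

/-- First Symanzik polynomial: sum over spanning trees `T` of `∏_{e ∉ T} α_e`. -/
noncomputable def treePoly (G : Multigraph V E) [Fintype E] [DecidableEq E] (α : E → ℝ) : ℝ :=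
  ∑ A ∈ Finset.univ.filter (fun A => G.IsForest A ∧ G.k A = 1),
    ∏ e ∈ Finset.univ \ A, α e

/-- The total weight `q_C` of the component `c` of the spanning subgraph `(V, A)`. -/
noncomputable def qComp (G : Multigraph V E) [Fintype V] (A : Finset E) (q : V → ℝ)
    (c : Quotient (G.compSetoid A)) : ℝ :=
  ∑ v ∈ Finset.univ.filter (fun v => Quotient.mk (G.compSetoid A) v = c), q v

/-- Generalized first Symanzik polynomial `𝒰_G(α, q)`. -/
noncomputable def genU (G : Multigraph V E) [Fintype V] [Fintype E] [DecidableEq E]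
    (α : E → ℝ) (q : V → ℝ) : ℝ :=
  ∑ A ∈ Finset.univ.filter (fun A => G.IsForest A),
    (∏ e ∈ Finset.univ \ A, α e) * ∏ c : Quotient (G.compSetoid A), G.qComp A q c

end Multigraph

/-- Euclidean dot product on `ℝ^d`. -/
def dotp {d : ℕ} (x y : Fin d → ℝ) : ℝ := ∑ i, x i * y i

/-- Total flag momentum `p_v` at the vertex `v`. -/
noncomputable def flagP {V Fl : Type} {d : ℕ} [Fintype Fl] (attach : Fl → V)
    (p : Fl → Fin d → ℝ) (v : V) : Fin d → ℝ :=
  ∑ f ∈ Finset.univ.filter (fun f => attach f = v), p f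

namespace Multigraph

/-- Total momentum `p_C` of the component `c` of the spanning subgraph `(V, A)`. -/
noncomputable def pComp (G : Multigraph V E) [Fintype Fl] (A : Finset E) (attach : Fl → V)
    (p : Fl → Fin d → ℝ) (c : Quotient (G.compSetoid A)) : Fin d → ℝ :=
  ∑ f ∈ Finset.univ.filter (fun f => Quotient.mk (G.compSetoid A) (attach f) = c), p f

/-- Generalized second Symanzik polynomial `𝒱_G(α, q, p)`. -/
noncomputable def genV (G : Multigraph V E) [Fintype V] [Fintype E] [DecidableEq E] [Fintype Fl]
    (α : E → ℝ) (q : V → ℝ) (attach : Fl → V) (p : Fl → Fin d → ℝ) : ℝ :=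
  ∑ A ∈ Finset.univ.filter (fun A => G.IsForest A),
    (∏ e ∈ Finset.univ \ A, α e) *
      ∑ c : Quotient (G.compSetoid A),
        dotp (G.pComp A attach p c) (G.pComp A attach p c) *
          ∏ c' ∈ Finset.univ.erase c, G.qComp A q c'

/-- Adding one new edge joining `v` and `v'`. -/
def addEdge (G : Multigraph V E) (v v' : V) : Multigraph V (Option E) :=
  ⟨fun e => e.elim (v, v') G.ends⟩

/-- Signed incidence matrix `ε_{ev}` (vanishing on self-loops). -/
noncomputable def eps (G : Multigraph V E) (e : E) (v : V) : ℝ :=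
  (if (G.ends e).1 = v then 1 else 0) - (if (G.ends e).2 = v then 1 else 0)

end Multigraph


namespace Multigraph
/-- The matrix `Q_G = D + A` on `E ⊕ V`: diagonal `α_e, q_v`, antisymmetric part `ε_{ev}`. -/
noncomputable def QMat (G : Multigraph V E) (α : E → ℝ) (q : V → ℝ) :
    Matrix (E ⊕ V) (E ⊕ V) ℝ :=
  Matrix.of fun i j =>
    match i, j with
    | Sum.inl e, Sum.inl e' => if e = e' then α e else 0
    | Sum.inl e, Sum.inr v => G.eps e v
    | Sum.inr v, Sum.inl e => -(G.eps e v)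
    | Sum.inr v, Sum.inr v' => if v = v' then q v else 0
end Multigraph

 
namespace Multigraph

/-! ### Contraction of an edge in the determinant -/

/-- If row `e` of `N` is `-δ_w` and column `e` is `δ_w`, then row and column `w` of `N` are irrelevant
to the determinant, and the block `[[0, -1], [1, *]]` on `{e, w}` may be replaced by the identity. -/
theorem det_pivot {n : Type} [Fintype n] [DecidableEq n] (N T : Matrix n n ℝ) (e w : n) (hew : e ≠ w)
    (hNe : ∀ j, N e j = if j = w then -1 else 0) (hNe' : ∀ i, N i e = if i = w then 1 else 0)
    (hTe : ∀ j, T e j = if j = e then 1 else 0) (hTe' : ∀ i, T i e = if i = e then 1 else 0)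
    (hTw : ∀ j, T w j = if j = w then 1 else 0) (hTw' : ∀ i, T i w = if i = w then 1 else 0)
    (hNT : ∀ i j, i ≠ e → i ≠ w → j ≠ e → j ≠ w → N i j = T i j) : N.det = T.det := by
  have hwe := hew.symm
  -- Row `e` clears column `w`, then column `e` clears row `w`.
  let N' : Matrix n n ℝ := Matrix.of fun i j =>
    if i = e then N e j else if j = w then 0 else N i j
  let N'' : Matrix n n ℝ := Matrix.of fun i j =>
    if i = w then (if j = e then 1 else 0) else if i = e then N e j else if j = w then 0 else N i j
  have h1 : N.det = N'.det := by
    apply Matrix.det_eq_of_forall_row_eq_smul_add_const (fun i => if i = e then 0 else -N i w) e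
    · simp
    · intro i j
      simp only [N', Matrix.of_apply]
      grind
  have h2 : N'.det = N''.det := by
    rw [← Matrix.det_transpose N', ← Matrix.det_transpose N'']
    apply Matrix.det_eq_of_forall_row_eq_smul_add_const
      (fun j => if j = e then 0 else if j = w then 0 else N w j) e
    · simp
    · intro i j
      simp only [N', N'', Matrix.transpose_apply, Matrix.of_apply]
      grind
  -- Three row operations turn the rows `(1, 0)`, `(0, 1)` of `T` on `{e, w}` into the rows
  -- `(0, -1)`, `(1, 0)` of `N''`.
  let T' : Matrix n n ℝ := Matrix.of fun i j =>
    if i = e then (if j = e then 1 else if j = w then -1 else 0) else T i j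
  let T'' : Matrix n n ℝ := Matrix.of fun i j =>
    if i = e then (if j = e then 1 else if j = w then -1 else 0)
    else if i = w then (if j = e then 1 else 0) else T i j
  have h3 : T'.det = T.det := by
    apply Matrix.det_eq_of_forall_row_eq_smul_add_const (fun i => if i = e then -1 else 0) w
    · simp [hwe]
    · intro i j
      simp only [T', Matrix.of_apply]
      grind
  have h4 : T''.det = T'.det := by
    apply Matrix.det_eq_of_forall_row_eq_smul_add_const (fun i => if i = w then 1 else 0) e
    · simp [hew]
    · intro i j
      simp only [T', T'', Matrix.of_apply]
      grind
  have h5 : N''.det = T''.det := by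
    apply Matrix.det_eq_of_forall_row_eq_smul_add_const (fun i => if i = e then -1 else 0) w
    · simp [hwe]
    · intro i j
      simp only [N'', T'', Matrix.of_apply]
      grind
  rw [h1, h2, h5, h4, h3]

/-- The matrix `Q_G` in which the row of every edge outside `B` is replaced by the unit row `δ_e`;
the columns of these edges are left alone, which does not affect the determinant. It plays the role
of `Q` for the spanning subgraph `(V, B)` without changing the index type. -/
noncomputable def redMat (G : Multigraph V E) (B : Finset E) (α : E → ℝ) (q : V → ℝ) :
    Matrix (E ⊕ V) (E ⊕ V) ℝ :=
  Matrix.of fun i j =>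
    match i, j with
    | Sum.inl e, Sum.inl e' => if e = e' then (if e ∈ B then α e else 1) else 0
    | Sum.inl e, Sum.inr v => if e ∈ B then G.eps e v else 0
    | Sum.inr v, Sum.inl e => -(G.eps e v)
    | Sum.inr v, Sum.inr v' => if v = v' then q v else 0

/-- Every endpoint `w` is moved to `u`, so that `w ≠ u` becomes an isolated vertex. If `e` joins `u` and
`w`, this is the contraction of `e`, except that `w` survives as an isolated vertex and `e` as a
self-loop. -/
noncomputable def merge (G : Multigraph V E) (u w : V) : Multigraph V E :=
  ⟨fun e => (if (G.ends e).1 = w then u else (G.ends e).1,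
    if (G.ends e).2 = w then u else (G.ends e).2)⟩

/-- The weights accompanying `merge`: `u` receives the weight of `w`, and the now isolated vertex `w`
gets weight `1`, so that its component does not contribute to products of component weights. -/
noncomputable def mergeQ (q : V → ℝ) (u w : V) (v : V) : ℝ :=
  if v = w then 1 else if v = u then q u + q w else q v

theorem eps_merge (G : Multigraph V E) {u w : V} (huw : u ≠ w) (f : E) (v : V) :
    (G.merge u w).eps f v =
      if v = w then 0 else if v = u then G.eps f u + G.eps f w else G.eps f v := by
  simp only [eps, merge]
  grind

/-- With `α_e` set to `0` for a non-loop `e`, the determinant is that of the contraction by `e`. -/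
theorem det_contract [Fintype V] [Fintype E] (G : Multigraph V E) (B : Finset E)
    (α : E → ℝ) (q : V → ℝ) {e : E} {u w : V} (heB : e ∉ B) (he : G.ends e = (u, w))
    (huw : u ≠ w) :
    ((G.redMat B α q).updateRow (Sum.inl e) (Sum.elim (fun _ : E => (0 : ℝ)) (G.eps e))).det =
      ((G.merge u w).redMat B α (mergeQ q u w)).det := by
  set N := (G.redMat B α q).updateRow (Sum.inl e) (Sum.elim (fun _ : E => (0 : ℝ)) (G.eps e)) with hN
  have hne : (Sum.inr u : E ⊕ V) ≠ Sum.inr w := by simpa using huw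
  -- Adding row `w` to row `u`, and column `w` to column `u`, makes the incidence row of `e` equal
  -- to `-δ_w`, and its column equal to `δ_w`.
  rw [← Matrix.det_updateRow_add_self N hne]
  set N1 := N.updateRow (Sum.inr u) (N (Sum.inr u) + N (Sum.inr w)) with hN1
  rw [← Matrix.det_updateCol_add_self N1 hne]
  have hu : ∀ v, G.eps e v = (if u = v then 1 else 0) - (if w = v then 1 else 0) := by
    intro v; simp only [eps, he]
  apply det_pivot _ _ (Sum.inl e) (Sum.inr w) (by simp)
  · rintro (f | v) <;>
    simp [Matrix.updateCol_apply, Matrix.updateRow_apply, hN1, hN, redMat, hu] <;> grind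
  · rintro (f | v) <;>
    simp [Matrix.updateCol_apply, Matrix.updateRow_apply, hN1, hN, redMat, hu] <;> grind
  · rintro (f | v) <;>
    simp [redMat, heB] <;> grind
  · rintro (f | v) <;>
    simp [redMat, eps_merge G huw, hu] <;> grind
  · rintro (f | v) <;>
    simp [redMat, eps_merge G huw, mergeQ] <;> grind
  · rintro (f | v) <;>
    simp [redMat, eps_merge G huw, mergeQ] <;> grind
  · rintro (f | v) (f' | v') <;>
    simp [Matrix.updateCol_apply, Matrix.updateRow_apply, hN1, hN, redMat, eps_merge G huw,
      mergeQ] <;> grind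

/-! ### Components after adding an edge -/

/-- If `t` arises from the equivalence relation `s` by joining the distinct classes of `u` and `w`,
then the classes of `t` correspond to the classes of `s` other than that of `w`. That nothing else
is joined is expressed by `t` lying below the kernel of the map sending the class of `w` to that
of `u`. -/
theorem quotient_glue (s t : Setoid V) {u w : V} (hst : s ≤ t) (htuw : t u w) (hnot : ¬ s u w)
    (hker : t ≤ Setoid.ker
      (fun v => if s v w then (Quotient.mk s u) else Quotient.mk s v)) :
    ∃ φ : Quotient t ≃ {c : Quotient s // c ≠ Quotient.mk s w},
      ∀ v, (φ (Quotient.mk t v)).1 = if s v w then (Quotient.mk s u) else Quotient.mk s v := by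
  have hne : ∀ v, (if s v w then (Quotient.mk s u) else Quotient.mk s v) ≠ Quotient.mk s w := by
    intro v h
    split_ifs at h with h'
    · exact hnot (Quotient.exact h)
    · exact h' (Quotient.exact h)
  let f : Quotient t → {c : Quotient s // c ≠ Quotient.mk s w} :=
    Quotient.lift (fun v => ⟨_, hne v⟩) (fun a b hab => Subtype.ext (hker hab))
  refine ⟨Equiv.ofBijective f ⟨?_, ?_⟩, fun v => rfl⟩
  · rintro ⟨a⟩ ⟨b⟩ h
    have h' := congrArg Subtype.val h
    change (if s a w then (Quotient.mk s u) else Quotient.mk s a) =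
      (if s b w then (Quotient.mk s u) else Quotient.mk s b) at h'
    apply Quotient.sound
    change t a b
    split_ifs at h' with ha hb hb
    · exact t.trans (hst ha) (t.symm (hst hb))
    · exact t.trans (t.trans (hst ha) (t.symm htuw)) (hst (Quotient.exact h'))
    · exact t.trans (hst (Quotient.exact h')) (t.trans htuw (t.symm (hst hb)))
    · exact hst (Quotient.exact h')
  · rintro ⟨⟨a⟩, ha⟩
    refine ⟨Quotient.mk t a, Subtype.ext ?_⟩
    change (if s a w then (Quotient.mk s u) else Quotient.mk s a) = Quotient.mk s a
    rw [if_neg]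
    exact fun h => ha (Quotient.sound h)

theorem card_glue [Fintype V] (s t : Setoid V) {w : V}
    (φ : Quotient t ≃ {c : Quotient s // c ≠ Quotient.mk s w}) :
    Nat.card (Quotient s) = Nat.card (Quotient t) + 1 := by
  rw [Nat.card_congr φ, Nat.card_eq_fintype_card, Nat.card_eq_fintype_card,
    Fintype.card_subtype_compl, Fintype.card_subtype_eq]
  have : 0 < Fintype.card (Quotient s) := Fintype.card_pos_iff.2 ⟨Quotient.mk s w⟩
  omega

theorem compSetoid_mono (G : Multigraph V E) {A B : Finset E} (h : A ⊆ B) :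
    G.compSetoid A ≤ G.compSetoid B :=
  Setoid.eqvGen_mono fun _ _ ⟨e, he, h'⟩ => ⟨e, h he, h'⟩

theorem compSetoid_edge (G : Multigraph V E) {A : Finset E} {e : E} (he : e ∈ A) :
    G.compSetoid A (G.ends e).1 (G.ends e).2 :=
  Relation.EqvGen.rel _ _ ⟨e, he, Or.inl rfl⟩

theorem compSetoid_le (G : Multigraph V E) {A : Finset E} {t : Setoid V}
    (h : ∀ e ∈ A, t (G.ends e).1 (G.ends e).2) : G.compSetoid A ≤ t := by
  apply Setoid.eqvGen_le
  rintro x y ⟨e, he, h' | h'⟩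
  · simpa [h'] using h e he
  · exact t.symm (by simpa [h'] using h e he)

theorem compSetoid_insert_eq (G : Multigraph V E) {A : Finset E} {e : E}
    (h : G.compSetoid A (G.ends e).1 (G.ends e).2) :
    G.compSetoid (insert e A) = G.compSetoid A := by
  apply le_antisymm
  · apply compSetoid_le
    intro f hf
    rcases Finset.mem_insert.1 hf with rfl | hf
    · exact h
    · exact G.compSetoid_edge hf
  · exact G.compSetoid_mono (Finset.subset_insert _ _)

theorem k_insert_eq (G : Multigraph V E) {A : Finset E} {e : E}
    (h : G.compSetoid A (G.ends e).1 (G.ends e).2) : G.k (insert e A) = G.k A := by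
  unfold k
  rw [compSetoid_insert_eq G h]

theorem k_insert_of_not [Fintype V] (G : Multigraph V E) {A : Finset E} {e : E}
    (h : ¬ G.compSetoid A (G.ends e).1 (G.ends e).2) : G.k A = G.k (insert e A) + 1 := by
  obtain ⟨φ, -⟩ := quotient_glue (G.compSetoid A) (G.compSetoid (insert e A))
    (G.compSetoid_mono (Finset.subset_insert _ _))
    (G.compSetoid_edge (Finset.mem_insert_self e A)) h (by
      apply compSetoid_le
      intro f hf
      rw [Setoid.ker_def]
      rcases Finset.mem_insert.1 hf with rfl | hf
      · rw [if_neg h, if_pos (Setoid.refl' _ _)]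
      · have := G.compSetoid_edge hf
        have h2 : Quotient.mk (G.compSetoid A) (G.ends f).1 = Quotient.mk _ (G.ends f).2 :=
          Quotient.sound this
        rw [h2]
        have h3 : G.compSetoid A (G.ends f).1 (G.ends e).2 ↔
            G.compSetoid A (G.ends f).2 (G.ends e).2 :=
          ⟨fun h => Setoid.trans' _ (Setoid.symm' _ this) h, fun h => Setoid.trans' _ this h⟩
        simp only [h3])
  exact card_glue _ _ φ

theorem compSetoid_empty (G : Multigraph V E) : G.compSetoid ∅ = ⊥ :=
  le_antisymm (compSetoid_le G (by simp)) bot_le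

/-! ### Forests -/

theorem card_le_k_add_card [Fintype V] (G : Multigraph V E) (A : Finset E) :
    Fintype.card V ≤ G.k A + A.card := by
  induction A using Finset.induction_on with
  | empty =>
    have : Nat.card V = G.k ∅ := by
      rw [k, compSetoid_empty]
      exact Nat.card_congr Setoid.quotientBotEquiv.symm
    simp [← this]
  | insert e A he ih =>
    rw [Finset.card_insert_of_notMem he]
    by_cases h : G.compSetoid A (G.ends e).1 (G.ends e).2
    · rw [k_insert_eq G h]; omega
    · have := k_insert_of_not G h; omega

/-- A bridge of `(V, B)` stays a bridge in every subgraph containing it. -/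
theorem IsForest.mono [Fintype V] {G : Multigraph V E} {A B : Finset E} (h : G.IsForest B)
    (hAB : A ⊆ B) : G.IsForest A := by
  intro e he
  have hB := h e (hAB he)
  have hn : ¬ G.compSetoid (B.erase e) (G.ends e).1 (G.ends e).2 := by
    intro h'
    have := k_insert_eq G h'
    rw [Finset.insert_erase (hAB he)] at this
    exact hB this.symm
  have hn' : ¬ G.compSetoid (A.erase e) (G.ends e).1 (G.ends e).2 :=
    fun h' => hn (G.compSetoid_mono (Finset.erase_subset_erase e hAB) h')
  have := k_insert_of_not G hn'
  rw [Finset.insert_erase he] at this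
  omega

/-- The matroid-theoretic count: forests are the edge sets attaining equality in
`card_le_k_add_card`. -/
theorem isForest_iff [Fintype V] (G : Multigraph V E) (A : Finset E) :
    G.IsForest A ↔ G.k A + A.card = Fintype.card V := by
  constructor
  · intro h
    induction A using Finset.induction_on with
    | empty =>
      have : Nat.card V = G.k ∅ := by
        rw [k, compSetoid_empty]
        exact Nat.card_congr Setoid.quotientBotEquiv.symm
      simp [← this]
    | insert e A he ih =>
      have h1 := ih (h.mono (Finset.subset_insert _ _))
      have h2 := h e (Finset.mem_insert_self _ _)
      rw [Finset.erase_insert he] at h2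
      have h3 : ¬ G.compSetoid A (G.ends e).1 (G.ends e).2 :=
        fun h' => h2 (k_insert_eq G h').symm
      have h4 := k_insert_of_not G h3
      rw [Finset.card_insert_of_notMem he]
      omega
  · intro h e he h'
    have h1 := G.card_le_k_add_card (A.erase e)
    have h2 := Finset.card_erase_add_one he
    omega

/-! ### Components and forests of a contraction -/

theorem merge_isolated (G : Multigraph V E) {u w : V} (A : Finset E) (huw : u ≠ w) {v : V} :
    (G.merge u w).compSetoid A v w ↔ v = w := by
  constructor
  · intro h
    have : (G.merge u w).compSetoid A ≤ Setoid.ker (fun v => v = w) := by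
      apply compSetoid_le
      intro f hf
      rw [Setoid.ker_def]
      simp only [merge]
      grind
    have := this h
    rw [Setoid.ker_def] at this
    simpa using this
  · rintro rfl
    exact Setoid.refl' _ _

/-- The components of `(V, insert e A)` are those of the contraction, apart from the isolated
vertex `w`. -/
theorem merge_glue (G : Multigraph V E) {u w : V} (A : Finset E) (huw : u ≠ w)
    {e : E} (he : G.ends e = (u, w)) :
    ∃ φ : Quotient (G.compSetoid (insert e A)) ≃
        {c : Quotient ((G.merge u w).compSetoid A) // c ≠ Quotient.mk _ w},
      ∀ v, (φ (Quotient.mk _ v)).1 = Quotient.mk _ (if v = w then u else v) := by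
  have htuw : G.compSetoid (insert e A) u w := by
    simpa [he] using G.compSetoid_edge (Finset.mem_insert_self e A)
  have hσ : ∀ v, G.compSetoid (insert e A) (if v = w then u else v) v := by
    intro v
    split_ifs with h
    · exact h ▸ htuw
    · exact Setoid.refl' _ _
  have key := quotient_glue ((G.merge u w).compSetoid A) (G.compSetoid (insert e A)) (u := u) (w := w)
    (by
      apply compSetoid_le
      intro f hf
      exact Setoid.trans' _ (hσ _) (Setoid.trans' _
        (G.compSetoid_edge (Finset.mem_insert_of_mem hf)) (Setoid.symm' _ (hσ _))))
    htuw (by rwa [merge_isolated G A huw])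
    (by
      apply compSetoid_le
      intro f hf
      rw [Setoid.ker_def]
      simp only [merge_isolated G A huw]
      rcases Finset.mem_insert.1 hf with rfl | hf
      · simp [he]
      · have := Quotient.sound ((G.merge u w).compSetoid_edge hf)
        simp only [merge] at this
        split_ifs at this ⊢ <;> exact this)
  obtain ⟨φ, hφ⟩ := key
  refine ⟨φ, fun v => ?_⟩
  rw [hφ]
  simp only [merge_isolated G A huw]
  split_ifs <;> rfl

theorem prod_merge [Fintype V] (G : Multigraph V E) {u w : V} (A : Finset E) (huw : u ≠ w)
    {e : E} (he : G.ends e = (u, w)) (q : V → ℝ) :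
    ∏ c, (G.merge u w).qComp A (mergeQ q u w) c = ∏ c, G.qComp (insert e A) q c := by
  obtain ⟨φ, hφ⟩ := merge_glue G A huw he
  rw [Fintype.prod_eq_mul_prod_subtype_ne _ (Quotient.mk ((G.merge u w).compSetoid A) w)]
  have h1 : (G.merge u w).qComp A (mergeQ q u w) (Quotient.mk _ w) = 1 := by
    unfold qComp
    have : (Finset.univ.filter fun v => Quotient.mk ((G.merge u w).compSetoid A) v =
        Quotient.mk _ w) = {w} := by
      ext v
      simp only [Finset.mem_filter, Finset.mem_univ, true_and, Finset.mem_singleton]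
      rw [← merge_isolated G A huw]
      exact Quotient.eq
    rw [this]
    simp [mergeQ]
  rw [h1, one_mul]
  symm
  refine Fintype.prod_equiv φ _ _ fun c => ?_
  have hc : ∀ v, Quotient.mk (G.compSetoid (insert e A)) v = c ↔
      Quotient.mk ((G.merge u w).compSetoid A) (if v = w then u else v) = (φ c).1 := by
    intro v
    rw [← hφ, ← Subtype.ext_iff, φ.apply_eq_iff_eq]
  have hw : Quotient.mk ((G.merge u w).compSetoid A) w ≠ (φ c).1 := fun h => (φ c).2 h.symm
  unfold qComp
  simp only [hc]
  rw [Finset.sum_filter, Finset.sum_filter, ← Finset.add_sum_erase Finset.univ _ (Finset.mem_univ w),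
    ← Finset.add_sum_erase (Finset.univ.erase w) _ (Finset.mem_erase.2 ⟨huw, Finset.mem_univ u⟩),
    ← Finset.add_sum_erase Finset.univ (fun v => if _ = _ then mergeQ q u w v else 0)
      (Finset.mem_univ w),
    ← Finset.add_sum_erase (Finset.univ.erase w) (fun v => if _ = _ then mergeQ q u w v else 0)
      (Finset.mem_erase.2 ⟨huw, Finset.mem_univ u⟩)]
  rw [if_neg hw, if_pos rfl, if_neg huw, zero_add, ← add_assoc]
  congr 1
  · simp only [mergeQ, if_neg huw, if_pos]
    split_ifs <;> ring
  · apply Finset.sum_congr rfl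
    intro v hv
    simp only [Finset.mem_erase] at hv
    simp [mergeQ, hv.1, hv.2.1]

/-- The product of the component weights of `(V, A)` if `A` is a forest, and `0` otherwise. -/
noncomputable def forestWeight [Fintype V] (G : Multigraph V E) (q : V → ℝ) (A : Finset E) : ℝ :=
  if G.IsForest A then ∏ c, G.qComp A q c else 0

theorem forestWeight_merge [Fintype V] (G : Multigraph V E) (q : V → ℝ) {A : Finset E} {e : E}
    {u w : V} (heA : e ∉ A) (he : G.ends e = (u, w)) (huw : u ≠ w) :
    G.forestWeight q (insert e A) = (G.merge u w).forestWeight (mergeQ q u w) A := by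
  unfold forestWeight
  rw [prod_merge G A huw he]
  obtain ⟨φ, -⟩ := merge_glue G A huw he
  have h := card_glue _ _ φ
  have : G.IsForest (insert e A) ↔ (G.merge u w).IsForest A := by
    rw [isForest_iff, isForest_iff, Finset.card_insert_of_notMem heA]
    unfold k
    omega
  simp only [this]

theorem forestWeight_loop [Fintype V] (G : Multigraph V E) (q : V → ℝ) {A : Finset E} {e : E}
    (heA : e ∉ A) (he : (G.ends e).1 = (G.ends e).2) :
    G.forestWeight q (insert e A) = 0 := by
  unfold forestWeight
  rw [if_neg]
  intro h
  apply h e (Finset.mem_insert_self _ _)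
  rw [Finset.erase_insert heA, k_insert_eq]
  rw [he]

/-! ### Deletion-contraction -/

/-- The main identity for all spanning subgraphs `(V, B)`. The graph and the weights vary in the
induction on `B`, since contracting an edge changes both. -/
theorem det_redMat [Fintype V] [Fintype E] (B : Finset E) (α : E → ℝ) :
    ∀ (G : Multigraph V E) (q : V → ℝ), (G.redMat B α q).det =
      ∑ A ∈ B.powerset, (∏ e ∈ B \ A, α e) * G.forestWeight q A := by
  induction B using Finset.induction_on with
  | empty =>
    intro G q
    have hM : G.redMat ∅ α q = Matrix.fromBlocks 1 0 
        (Matrix.of fun v e => -G.eps e v) (Matrix.diagonal q) := by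
      ext (e | v) (e' | v') <;> simp [redMat, Matrix.one_apply, Matrix.diagonal_apply]
    rw [hM, Matrix.det_fromBlocks_zero₁₂]
    have hf : G.IsForest ∅ := fun e he => absurd he (by simp)
    simp only [Matrix.det_one, Matrix.det_diagonal, one_mul, Finset.powerset_empty,
      Finset.sum_singleton, forestWeight, if_pos hf]
    simp only [Finset.sdiff_self, Finset.prod_empty, one_mul]
    have hinj : Function.Bijective (Quotient.mk (G.compSetoid ∅)) := by
      refine ⟨fun a b h => ?_, Quotient.mk_surjective⟩
      have := Quotient.exact h
      change G.compSetoid ∅ a b at this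
      rwa [compSetoid_empty] at this
    refine Fintype.prod_bijective _ hinj _ _ fun v => ?_
    simp [qComp, hinj.1.eq_iff, Finset.sum_filter]
  | insert e B he ih =>
    intro G q
    rw [Finset.sum_powerset_insert he]
    -- Deletion-contraction: the row of `e` is `α_e δ_e` plus the incidence row of `e`.
    have hM : G.redMat (insert e B) α q = (G.redMat B α q).updateRow (Sum.inl e)
        (α e • G.redMat B α q (Sum.inl e) + Sum.elim (fun _ : E => (0 : ℝ)) (G.eps e)) := by
      ext (f | v) (f' | v') <;> simp [redMat, Matrix.updateRow_apply] <;> grind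
    rw [hM, Matrix.det_updateRow_add, Matrix.det_updateRow_smul, Matrix.updateRow_eq_self, ih]
    congr 1
    · rw [Finset.mul_sum]
      apply Finset.sum_congr rfl
      intro A hA
      have heA : e ∉ A := fun h => he (Finset.mem_powerset.1 hA h)
      rw [Finset.insert_sdiff_of_notMem _ heA, Finset.prod_insert (by simp [he]), mul_assoc]
    · have hs : ∀ A, insert e B \ insert e A = B \ A := by
        intro A
        ext x; simp only [Finset.mem_sdiff, Finset.mem_insert]; grind
      have hA : ∀ A ∈ B.powerset, e ∉ A := fun A hA h => he (Finset.mem_powerset.1 hA h)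
      simp only [hs]
      by_cases hl : (G.ends e).1 = (G.ends e).2
      · rw [Matrix.det_eq_zero_of_row_eq_zero (Sum.inl e), Finset.sum_eq_zero]
        · intro A h
          rw [forestWeight_loop G q (hA A h) hl, mul_zero]
        · rintro (f | v) <;> simp [eps, hl]
      · rw [det_contract G B α q he rfl hl, ih]
        apply Finset.sum_congr rfl
        intro A h
        rw [forestWeight_merge G q (hA A h) rfl hl]

end Multigraph

/-- `det Q_G = 𝒰_G(α, q)`, the generalized first Symanzik polynomial. -/
theorem det_QMat_eq_genU {V E : Type} [Fintype V] [Fintype E] [DecidableEq V] [DecidableEq E]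
    (G : Multigraph V E) (α : E → ℝ) (q : V → ℝ) :
    (G.QMat α q).det = G.genU α q := by
  have hM : G.QMat α q = G.redMat Finset.univ α q := by
    ext (e | v) (e' | v') <;> simp [Multigraph.redMat, Multigraph.QMat]
  rw [hM]
  have key := Multigraph.det_redMat Finset.univ α G q
  unfold Multigraph.forestWeight at key
  simp only [mul_ite, mul_zero, ← Finset.sum_filter, Finset.powerset_univ] at key
  unfold Multigraph.genU
  convert key
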